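/- Universal and synchronous validity of TeamLTL coincide: for every TeamLTL formula φ, every nonempty team T satisfies T ⊨∀ φ if and only if every nonempty team T' satisfies T' ⊨ₛ φ. -/

import Mathlib

/-!
The truth of a formula at `(T, τ)` depends only on the values `T i (τ n i)` read along `τ`. Reading
`T` along an arbitrary `τ` is therefore the same as reading the team `i, n ↦ T i (τ n i)`
synchronously, and this team is again among those over which validity quantifies. Conversely, the
synchronous evaluation is one of the initial tefs.
-/

namespace TTS

abbrev Trace (AP : Type) := ℕ → Set AP

def IsStutTef {ι : Type} (τ : ℕ → ι → ℕ) : Prop :=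
  ∀ n i, τ n i ≤ τ (n + 1) i

def IsTef {ι : Type} (τ : ℕ → ι → ℕ) : Prop :=
  IsStutTef τ ∧ (∀ n, τ n ≠ τ (n + 1)) ∧ (∀ n i, τ (n + 1) i ≤ τ n i + 1)

def Initial {ι : Type} (τ : ℕ → ι → ℕ) : Prop := ∀ i, τ 0 i = 0

def shift {ι : Type} (τ : ℕ → ι → ℕ) (k : ℕ) : ℕ → ι → ℕ := fun n => τ (n + k)

inductive Formula (AP : Type) : Type
  | atom : AP → Formula AP
  | natom : AP → Formula AP
  | and : Formula AP → Formula AP → Formula AP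
  | or : Formula AP → Formula AP → Formula AP
  | X : Formula AP → Formula AP
  | U : Formula AP → Formula AP → Formula AP
  | W : Formula AP → Formula AP → Formula AP

def sat {AP : Type} : {ι : Type} → (ι → Trace AP) → (ℕ → ι → ℕ) → Formula AP → Prop
  | _, T, τ, .atom p => ∀ i, p ∈ T i (τ 0 i)
  | _, T, τ, .natom p => ∀ i, p ∉ T i (τ 0 i)
  | _, T, τ, .and φ ψ => sat T τ φ ∧ sat T τ ψ
  | ι, T, τ, .or φ ψ =>
      ∃ P : ι → Prop,
        sat (fun i : {i // P i} => T i.1) (fun n i => τ n i.1) φ ∧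
        sat (fun i : {i // ¬ P i} => T i.1) (fun n i => τ n i.1) ψ
  | _, T, τ, .X φ => sat T (shift τ 1) φ
  | _, T, τ, .U φ ψ =>
      ∃ k, sat T (shift τ k) ψ ∧ ∀ m, m < k → sat T (shift τ m) φ
  | _, T, τ, .W φ ψ =>
      ∀ k, sat T (shift τ k) φ ∨ ∃ m, m ≤ k ∧ sat T (shift τ m) ψ

def satE {AP ι : Type} (T : ι → Trace AP) (φ : Formula AP) : Prop :=
  ∃ τ : ℕ → ι → ℕ, IsTef τ ∧ Initial τ ∧ sat T τ φ

def satA {AP ι : Type} (T : ι → Trace AP) (φ : Formula AP) : Prop :=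
  ∀ τ : ℕ → ι → ℕ, IsTef τ → Initial τ → sat T τ φ

def satS {AP ι : Type} (T : ι → Trace AP) (φ : Formula AP) : Prop :=
  sat T (fun n _ => n) φ

def tshift {AP : Type} (t : Trace AP) (k : ℕ) : Trace AP := fun n => t (n + k)

def ltlSat {AP : Type} : Trace AP → Formula AP → Prop
  | t, .atom p => p ∈ t 0
  | t, .natom p => p ∉ t 0
  | t, .and φ ψ => ltlSat t φ ∧ ltlSat t ψ
  | t, .or φ ψ => ltlSat t φ ∨ ltlSat t ψ
  | t, .X φ => ltlSat (tshift t 1) φ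
  | t, .U φ ψ => ∃ k, ltlSat (tshift t k) ψ ∧ ∀ m, m < k → ltlSat (tshift t m) φ
  | t, .W φ ψ => ∀ k, ltlSat (tshift t k) φ ∨ ∃ m, m ≤ k ∧ ltlSat (tshift t m) ψ

section

variable {AP ι : Type}

/-- The team of traces read off `T` along `τ`: the `i`-th trace has, at time `n`, the letter
`T i (τ n i)`. It reduces evaluation along `τ` to synchronous evaluation; `τ` is arbitrary, so
letters of `T` may be repeated or skipped. -/
def resample (T : ι → Trace AP) (τ : ℕ → ι → ℕ) : ι → Trace AP :=
  fun i n => T i (τ n i)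

theorem sat_congr {T T' : ι → Trace AP} {τ τ' : ℕ → ι → ℕ}
    (h : ∀ n i, T i (τ n i) = T' i (τ' n i)) (φ : Formula AP) : sat T τ φ ↔ sat T' τ' φ := by
  induction φ generalizing ι with
  | atom p | natom p => simp only [sat, h]
  | and _ _ ihφ ihψ => exact and_congr (ihφ h) (ihψ h)
  | or _ _ ihφ ihψ =>
    exact exists_congr fun _ => and_congr (ihφ fun n i => h n i) (ihψ fun n i => h n i)
  | X _ ih => exact ih fun n => h (n + 1)
  | U φ ψ ihφ ihψ =>
    have hφ (k : ℕ) : sat T (shift τ k) φ ↔ sat T' (shift τ' k) φ := ihφ fun n => h (n + k)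
    have hψ (k : ℕ) : sat T (shift τ k) ψ ↔ sat T' (shift τ' k) ψ := ihψ fun n => h (n + k)
    simp only [sat, hφ, hψ]
  | W φ ψ ihφ ihψ =>
    have hφ (k : ℕ) : sat T (shift τ k) φ ↔ sat T' (shift τ' k) φ := ihφ fun n => h (n + k)
    have hψ (k : ℕ) : sat T (shift τ k) ψ ↔ sat T' (shift τ' k) ψ := ihψ fun n => h (n + k)
    simp only [sat, hφ, hψ]

theorem satS_resample_iff (T : ι → Trace AP) (τ : ℕ → ι → ℕ) (φ : Formula AP) :
    satS (resample T τ) φ ↔ sat T τ φ :=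
  sat_congr (T := resample T τ) (τ := fun n _ => n) (T' := T) (τ' := τ) (fun _ _ => rfl) φ

theorem isTef_synchronous [Nonempty ι] : IsTef (fun n (_ : ι) => n) :=
  ⟨fun n _ => n.le_succ, fun n => Function.const_injective.ne n.succ_ne_self.symm,
    fun _ _ => le_rfl⟩

theorem satA.satS [Nonempty ι] {T : ι → Trace AP} {φ : Formula AP} (h : satA T φ) : satS T φ :=
  h _ isTef_synchronous fun _ => rfl

theorem satA_satS_equivalid_general [Nonempty ι] (φ : Formula AP) :
    (∀ T : ι → Trace AP, satA T φ) ↔ ∀ T : ι → Trace AP, satS T φ :=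
  ⟨fun h T => (h T).satS, fun h T τ _ _ => (satS_resample_iff T τ φ).mp (h (resample T τ))⟩

end

/-- Universal and synchronous validity of TeamLTL coincide. -/
theorem satA_satS_equivalid (AP : Type) (φ : Formula AP) :
    (∀ (ι : Type) (T : ι → Trace AP), Nonempty ι → satA T φ) ↔
    (∀ (ι : Type) (T : ι → Trace AP), Nonempty ι → satS T φ) := by
  exact ⟨fun h ι T hι => (satA_satS_equivalid_general φ).mp (fun T => h ι T hι) T,
    fun h ι T hι => (satA_satS_equivalid_general φ).mpr (fun T => h ι T hι) T⟩

end TTS
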